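/- Let Φ : ℝ² → ℝ be defined by Φ(x₁, x₂) = x₁⁴ − 2x₁²x₂ (i.e. Φ = (x₁² − x₂)² − x₂²). Then for every integer k ≥ 2, every δ₁ ∈ (0,1), and every constant C > 0, there exists x ∈ ℝ² such that Σ_{j∈I_{x,Φ}} λ_{Φ,j}(x) > C ( M_Φ(x) + |∇Φ(x)|² + Σ_{2≤|α|≤k} |∂^α Φ(x)|^{(2−δ₁)/|α|} + 1 ). Indeed, at the points x = (0, x₂) with x₂ < 0 one has ∇Φ(0, x₂) = 0, the Hessian of Φ equals diag(−4x₂, 0), so the left-hand side equals 4|x₂| while the right-hand side is of order |x₂|^{1−δ₁/2} as x₂ → −∞. -/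

import Mathlib

open MeasureTheory Filter Topology Metric

noncomputable section

/-- Euclidean space ℝⁿ. -/
abbrev En (n : ℕ) := EuclideanSpace ℝ (Fin n)

/-- First-order partial derivative in direction `i`, as an endomorphism of functions. -/
noncomputable def pd1 (n : ℕ) (i : Fin n) : Function.End (En n → ℝ) :=
  fun f x => fderiv ℝ f x (EuclideanSpace.single i 1)

/-- Order `|α|` of a multi-index. -/
def mdeg {n : ℕ} (α : Fin n → ℕ) : ℕ := ∑ i, α i

/-- Iterated partial derivative `∂^α`. -/
noncomputable def pdm (n : ℕ) (α : Fin n → ℕ) (f : En n → ℝ) : En n → ℝ :=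
  ((List.ofFn fun i : Fin n => (pd1 n i) ^ (α i)).prod) f

/-- The finite set of multi-indices `lo ≤ |α| ≤ k`. -/
def midx (n k lo : ℕ) : Finset (Fin n → ℕ) :=
  (Finset.Iic fun _ => k).filter fun α => lo ≤ mdeg α ∧ mdeg α ≤ k

/-- `f̃(x) = Σ_{1≤|α|≤k} |∂^α V(x)|^{1/|α|}`. -/
noncomputable def ftil (n k : ℕ) (V : En n → ℝ) (x : En n) : ℝ :=
  ∑ α ∈ midx n k 1, |pdm n α V x| ^ ((1 : ℝ) / (mdeg α))

/-- `f̃_τ(x) = Σ_{1≤|α|≤k} τ^{1/|α|} |∂^α V(x)|^{1/|α|}`. -/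
noncomputable def ftilTau (n k : ℕ) (V : En n → ℝ) (τ : ℝ) (x : En n) : ℝ :=
  ∑ α ∈ midx n k 1, τ ^ ((1 : ℝ) / (mdeg α)) * |pdm n α V x| ^ ((1 : ℝ) / (mdeg α))

/-- Regularized weight `f(x) = Σ_{1≤|α|≤k} (1 + |∂^α V(x)|²)^{1/(2|α|)}`. -/
noncomputable def freg (n k : ℕ) (V : En n → ℝ) (x : En n) : ℝ :=
  ∑ α ∈ midx n k 1, (1 + |pdm n α V x| ^ 2) ^ ((1 : ℝ) / (2 * mdeg α))

/-- The Hessian matrix `(∂_i ∂_j ρ)(x)`. -/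
noncomputable def hessM (n : ℕ) (ρ : En n → ℝ) (x : En n) : Matrix (Fin n) (Fin n) ℝ :=
  fun i j => pd1 n i (pd1 n j ρ) x

/-- Eigenvalues of the Hessian matrix (with value 0 in the degenerate non-symmetric case). -/
noncomputable def hessEig (n : ℕ) (ρ : En n → ℝ) (x : En n) : Fin n → ℝ :=
  if h : (hessM n ρ x).IsHermitian then h.eigenvalues else 0

/-- `Σ_{j ∈ I_{x,ρ}} λ_{ρ,j}(x)`, the sum of the positive eigenvalues of the Hessian. -/
noncomputable def lamPos (n : ℕ) (ρ : En n → ℝ) (x : En n) : ℝ :=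
  ∑ j, max (hessEig n ρ x j) 0

/-- `M_ρ(x) = Σ_j max{−λ_{ρ,j}(x), 0}`. -/
noncomputable def lamNeg (n : ℕ) (ρ : En n → ℝ) (x : En n) : ℝ :=
  ∑ j, max (-(hessEig n ρ x j)) 0

/-- Assumption (i)–(iii) of the paper. -/
def AssumptionA (n k : ℕ) (V : En n → ℝ) : Prop :=
  (∃ C₀ > (1 : ℝ), ∃ δ₁ ∈ Set.Ioo (0 : ℝ) 1, ∀ x : En n,
      lamPos n V x ≤ C₀ * (lamNeg n V x + ‖gradient V x‖ ^ 2
        + (∑ α ∈ midx n k 2, |pdm n α V x| ^ ((2 - δ₁) / (mdeg α))) + 1)) ∧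
  (∃ δ₂ ∈ Set.Ioo (0 : ℝ) 1, ∀ α : Fin n → ℕ, mdeg α = k + 1 →
      ∃ Cα > (0 : ℝ), ∀ x : En n,
        |pdm n α V x| ≤ Cα * (1 + ftil n k V x) ^ ((k : ℝ) + 1 - δ₂)) ∧
  (∀ M : ℝ, ∃ R : ℝ, ∀ x : En n, R ≤ ‖x‖ → M ≤ ftil n k V x)

/-- The Witten-Laplacian quadratic form `Q_{τV}(u) = ∫ |∇u + τ u ∇V|²`. -/
noncomputable def Qform (n : ℕ) (V : En n → ℝ) (τ : ℝ) (u : En n → ℝ) : ℝ :=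
  ∫ x : En n, ‖gradient u x + (τ * u x) • gradient V x‖ ^ 2

/-- `u ∈ C_c^∞(ℝⁿ; ℝ)`. -/
def TestFun (n : ℕ) (u : En n → ℝ) : Prop :=
  ContDiff ℝ (⊤ : ℕ∞) u ∧ HasCompactSupport u

/-- `p` is (given by) a real polynomial of total degree at most `r`. -/
def IsPolyDeg (n r : ℕ) (p : En n → ℝ) : Prop :=
  ∃ P : MvPolynomial (Fin n) ℝ, P.totalDegree ≤ r ∧
    ∀ x : En n, p x = MvPolynomial.eval (fun i => x i) P

/-- `q ∈ L_{p,0}` (limiting polynomials of `p` at `0` of degree at most `r`). -/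
def memL (n r : ℕ) (p q : En n → ℝ) : Prop :=
  IsPolyDeg n r q ∧ q 0 = 0 ∧
  ∃ y : ℕ → En n, ∃ τ h : ℕ → ℝ,
    Tendsto y atTop (nhds 0) ∧ (∀ j, 0 < τ j) ∧ (∀ j, 0 < h j) ∧
    Tendsto τ atTop atTop ∧ Tendsto h atTop (nhds 0) ∧
    ∀ α : Fin n → ℕ, 1 ≤ mdeg α → mdeg α ≤ r →
      Tendsto (fun j => τ j * h j ^ (mdeg α) * pdm n α p (y j)) atTop
        (nhds (pdm n α q 0))

/-!
Restricted to a line parallel to the `x₂`-axis, `Φ` is affine, and partial differentiation preserves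
this property. So every `∂^α Φ (0, x₂)` is `O(|x₂|)`, and for `|α| ≥ 2` its power with exponent
`(2 - δ₁) / |α| < 1` is `o(|x₂|)`. Since `∇Φ` vanishes on the line `x₁ = 0` and the Hessian there is
`diag(-4x₂, 0)`, the positive eigenvalue `4|x₂|` eventually beats any constant multiple of the
right-hand side as `x₂ → -∞`.
-/

section Growth

open Asymptotics Bornology

lemma isLittleO_abs_rpow_of_isBigO {β : Type*} {l : Filter β} {f g : β → ℝ} {s : ℝ}
    (hs₀ : 0 ≤ s) (hs₁ : s < 1) (hfg : f =O[l] g) (hg : (fun _ => (1 : ℝ)) =o[l] g) :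
    (fun x => |f x| ^ s) =o[l] g := by
  have hf_rpow : (fun x => |f x| ^ s) =O[l] fun x => |g x| ^ s :=
    hfg.abs_abs.rpow hs₀ (.of_forall fun x => abs_nonneg (g x))
  have hg_rpow : (fun _ => (1 : ℝ)) =o[l] fun x => |g x| ^ (1 - s) := by
    simpa only [Real.one_rpow] using
      hg.abs_right.rpow (sub_pos.2 hs₁) (.of_forall fun x => abs_nonneg (g x))
  have hmul (x : β) : |g x| ^ s * |g x| ^ (1 - s) = |g x| := by
    rw [← Real.rpow_add_of_nonneg (abs_nonneg _) hs₀ (sub_nonneg.2 hs₁.le),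
      add_sub_cancel, Real.rpow_one]
  simpa only [mul_one, hmul, isLittleO_abs_right] using hf_rpow.mul_isLittleO hg_rpow

/-- `f` restricts to an affine function on every line with direction `v`. The slope is encoded as
`f (x + v) - f x`, so that the condition is an identity between translates of `f` and can be
differentiated. -/
def IsAffineAlong {E : Type*} [AddCommGroup E] [Module ℝ E] (v : E) (f : E → ℝ) : Prop :=
  ∀ x : E, ∀ t : ℝ, f (x + t • v) = f x + t * (f (x + v) - f x)

lemma IsAffineAlong.isBigO {E : Type*} [AddCommGroup E] [Module ℝ E] {v : E} {f : E → ℝ}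
    (hf : IsAffineAlong v f) (x : E) : (fun t : ℝ => f (x + t • v)) =O[cobounded ℝ] id := by
  simp only [hf x, mul_comm _ (f (x + v) - f x)]
  exact (isLittleO_const_id_cobounded (f x)).isBigO.add ((isBigO_refl id _).const_mul_left _)

lemma IsAffineAlong.fderiv_apply {E : Type*} [NormedAddCommGroup E] [NormedSpace ℝ E] {v : E}
    {f : E → ℝ} (hf : IsAffineAlong v f) (hdiff : Differentiable ℝ f) (w : E) :
    IsAffineAlong v fun x => fderiv ℝ f x w := by
  intro x t
  have hv : DifferentiableAt ℝ (fun y => f (y + v)) x := by fun_prop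
  calc fderiv ℝ f (x + t • v) w
      = fderiv ℝ (fun y => f y + t * (f (y + v) - f y)) x w := by
        rw [← fderiv_comp_add_right, funext fun y => hf y t]
    _ = fderiv ℝ f x w + t * (fderiv ℝ f (x + v) w - fderiv ℝ f x w) := by
        rw [fderiv_fun_add (hdiff x) ((hv.fun_sub (hdiff x)).const_mul t),
          fderiv_const_mul (hv.fun_sub (hdiff x)), fderiv_fun_sub hv (hdiff x),
          fderiv_comp_add_right]
        rfl

end Growth

section PartialDerivatives

open Asymptotics Bornology MvPolynomial

variable {n : ℕ}

lemma pdm_mem_of_forall_pd1_mem {S : Set (En n → ℝ)} (hS : ∀ i, ∀ f ∈ S, pd1 n i f ∈ S)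
    (α : Fin n → ℕ) {f : En n → ℝ} (hf : f ∈ S) : pdm n α f ∈ S := by
  let stab : Submonoid (Function.End (En n → ℝ)) :=
    { carrier := {φ | Set.MapsTo φ S S}
      one_mem' := Set.mapsTo_id S
      mul_mem' := fun hφ hψ => hφ.comp hψ }
  have hpd1 (i : Fin n) : pd1 n i ∈ stab := hS i
  have hprod : (List.ofFn fun i : Fin n => pd1 n i ^ α i).prod ∈ stab :=
    stab.list_prod_mem (List.forall_mem_ofFn_iff.2 fun i => stab.pow_mem (hpd1 i) (α i))
  exact hprod hf

lemma IsAffineAlong.pdm {v : En n} {f : En n → ℝ} (hf : IsAffineAlong v f)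
    (hsmooth : ContDiff ℝ (⊤ : ℕ∞) f) (α : Fin n → ℕ) : IsAffineAlong v (pdm n α f) := by
  refine (pdm_mem_of_forall_pd1_mem (S := {g | ContDiff ℝ (⊤ : ℕ∞) g ∧ IsAffineAlong v g})
    ?_ α ⟨hsmooth, hf⟩).2
  rintro i g ⟨hg, hgv⟩
  exact ⟨(hg.fderiv_right le_rfl).clm_apply contDiff_const,
    hgv.fderiv_apply (hg.differentiable (by simp)) _⟩

lemma isLittleO_sum_abs_pdm_rpow {v : En n} {f : En n → ℝ} (hf : IsAffineAlong v f)
    (hsmooth : ContDiff ℝ (⊤ : ℕ∞) f) {δ : ℝ} (hδ : δ ∈ Set.Ioc 0 2) (k : ℕ) (x : En n) :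
    (fun t : ℝ => ∑ α ∈ midx n k 2, |pdm n α f (x + t • v)| ^ ((2 - δ) / (mdeg α)))
      =o[cobounded ℝ] id := by
  refine IsLittleO.fun_sum fun α hα => ?_
  have hdeg : (2 : ℝ) ≤ mdeg α := by exact_mod_cast (Finset.mem_filter.1 hα).2.1
  refine isLittleO_abs_rpow_of_isBigO (div_nonneg (sub_nonneg.2 hδ.2) (by positivity)) ?_
    ((hf.pdm hsmooth α).isBigO x) (isLittleO_const_id_cobounded 1)
  rw [div_lt_one (by positivity)]
  linarith [hδ.1]

lemma differentiable_eval (P : MvPolynomial (Fin n) ℝ) :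
    Differentiable ℝ fun x : En n => eval (fun i => x i) P := by
  induction P using MvPolynomial.induction_on with
  | C a => simp
  | add P Q hP hQ => simpa using hP.fun_add hQ
  | mul_X P i hP => simp only [map_mul, eval_X]; fun_prop

lemma pd1_eval (i : Fin n) (P : MvPolynomial (Fin n) ℝ) :
    pd1 n i (fun x => eval (fun j => x j) P) = fun x => eval (fun j => x j) (pderiv i P) := by
  funext x
  induction P using MvPolynomial.induction_on with
  | C a => simp [pd1]
  | add P Q hP hQ =>
    simp only [pd1, map_add] at hP hQ ⊢
    rw [fderiv_fun_add (differentiable_eval P x) (differentiable_eval Q x),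
      add_apply, hP, hQ]
  | mul_X P j hP =>
    have hcoord : HasFDerivAt (fun y : En n => y j) (EuclideanSpace.proj j : En n →L[ℝ] ℝ) x :=
      (EuclideanSpace.proj j : En n →L[ℝ] ℝ).hasFDerivAt
    simp only [pd1, map_mul, eval_X] at hP ⊢
    rw [fderiv_fun_mul (differentiable_eval P x) hcoord.differentiableAt, hcoord.fderiv]
    simp [hP, Pi.single_apply, pderiv_X, apply_ite, eq_comm, mul_comm]

lemma gradient_eq_zero_of_forall_pd1_eq_zero {f : En n → ℝ} {x : En n}
    (hf : ∀ i, pd1 n i f x = 0) : gradient f x = 0 := by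
  have hfderiv : fderiv ℝ f x = 0 := ContinuousLinearMap.coe_injective <|
    (EuclideanSpace.basisFun (Fin n) ℝ).toBasis.ext fun i => by simpa [pd1] using hf i
  rw [gradient, hfderiv, map_zero]

lemma sum_hessEig_of_hessM_eq_diagonal {f : En n → ℝ} {x : En n} {d : Fin n → ℝ}
    (hd : hessM n f x = Matrix.diagonal d) (g : ℝ → ℝ) :
    ∑ j, g (hessEig n f x j) = ∑ j, g (d j) := by
  have hH : (hessM n f x).IsHermitian := hd ▸ Matrix.isHermitian_diagonal d
  have hroots : Finset.univ.val.map (hessEig n f x) = Finset.univ.val.map d :=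
    calc Finset.univ.val.map (hessEig n f x)
        = (hessM n f x).charpoly.roots := by
          rw [hH.roots_charpoly_eq_eigenvalues, hessEig, dif_pos hH]
          rfl
      _ = Finset.univ.val.map d := by
          rw [hd, Matrix.charpoly_diagonal, Polynomial.roots_prod _ _
            (Finset.prod_ne_zero_iff.2 fun i _ => Polynomial.X_sub_C_ne_zero (d i))]
          simp
  simpa only [Finset.sum, Multiset.map_map, Function.comp_def] using
    congrArg (fun s => (s.map g).sum) hroots

end PartialDerivatives

section Phi

open MvPolynomial

/-- The potential `Φ(x₁, x₂) = x₁⁴ − 2x₁²x₂`; the paper's `x₁, x₂` are `x 0, x 1`. -/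
def phi (x : En 2) : ℝ := x 0 ^ 4 - 2 * x 0 ^ 2 * x 1

lemma phi_eq_eval : phi =
    fun x => eval (fun i => x i) (X 0 ^ 4 - C 2 * X 0 ^ 2 * X 1 : MvPolynomial (Fin 2) ℝ) := by
  funext x
  simp [phi]

lemma contDiff_phi : ContDiff ℝ (⊤ : ℕ∞) phi := by
  unfold phi
  fun_prop

lemma isAffineAlong_phi : IsAffineAlong (EuclideanSpace.single 1 1) phi := by
  intro x t
  simp only [phi, PiLp.add_apply, PiLp.smul_apply, PiLp.single_eq_same, ne_eq, zero_ne_one,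
    not_false_eq_true, PiLp.single_eq_of_ne, smul_eq_mul]
  ring

lemma gradient_phi (t : ℝ) : gradient phi !₂[0, t] = 0 := by
  refine gradient_eq_zero_of_forall_pd1_eq_zero fun i => ?_
  rw [phi_eq_eval, pd1_eval]
  fin_cases i <;> simp [pderiv_X]

lemma hessM_phi (t : ℝ) : hessM 2 phi !₂[0, t] = Matrix.diagonal ![-4 * t, 0] := by
  ext i j
  simp only [hessM, phi_eq_eval, pd1_eval]
  fin_cases i <;> fin_cases j <;> norm_num [pderiv_X, mul_comm t]

lemma lamPos_phi {t : ℝ} (ht : t ≤ 0) : lamPos 2 phi !₂[0, t] = -4 * t := by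
  rw [lamPos, sum_hessEig_of_hessM_eq_diagonal (hessM_phi t) (max · 0)]
  simpa using mul_nonpos_of_nonneg_of_nonpos zero_le_four ht

lemma lamNeg_phi {t : ℝ} (ht : t ≤ 0) : lamNeg 2 phi !₂[0, t] = 0 := by
  rw [lamNeg, sum_hessEig_of_hessM_eq_diagonal (hessM_phi t) (fun a => max (-a) 0)]
  simpa using mul_nonpos_of_nonneg_of_nonpos zero_le_four ht

end Phi

theorem Phi_violates_assumption_general (Φ : En 2 → ℝ)
    (hΦ : ∀ x : En 2, Φ x = (x 0) ^ 4 - 2 * (x 0) ^ 2 * (x 1))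
    (k : ℕ) {δ₁ : ℝ} (hδ₁ : δ₁ ∈ Set.Ioc (0 : ℝ) 2) (C : ℝ) :
    ∀ᶠ t in atBot,
      C * (lamNeg 2 Φ !₂[0, t] + ‖gradient Φ !₂[0, t]‖ ^ 2
          + (∑ α ∈ midx 2 k 2, |pdm 2 α Φ !₂[0, t]| ^ ((2 - δ₁) / (mdeg α))) + 1)
        < lamPos 2 Φ !₂[0, t] := by
  obtain rfl : Φ = phi := funext hΦ
  have hline (t : ℝ) : (0 : En 2) + t • EuclideanSpace.single 1 1 = !₂[0, t] := by
    ext i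
    fin_cases i <;> simp
  have hsum := isLittleO_sum_abs_pdm_rpow isAffineAlong_phi contDiff_phi hδ₁ k 0
  have hrhs := (hsum.add (Asymptotics.isLittleO_const_id_cobounded 1)).const_mul_left C
  filter_upwards [(hrhs.mono IsOrderBornology.atBot_le_cobounded).bound one_pos,
    eventually_lt_atBot 0] with t hbound ht
  simp only [hline, id, Real.norm_eq_abs, abs_of_neg ht] at hbound
  rw [lamNeg_phi ht.le, gradient_phi, lamPos_phi ht.le, norm_zero, zero_pow two_ne_zero,
    zero_add, zero_add]
  linarith [le_of_abs_le hbound]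

/-- the potential `Φ(x) = x₁⁴ − 2x₁²x₂` violates condition (1.6) of
Assumption (i) for every `k ≥ 2`, `δ₁ ∈ (0,1)` and `C > 0`. -/
theorem Phi_violates_assumption (Φ : En 2 → ℝ)
    (hΦ : ∀ x : En 2, Φ x = (x 0) ^ 4 - 2 * (x 0) ^ 2 * (x 1)) :
    ∀ k : ℕ, 2 ≤ k → ∀ δ₁ ∈ Set.Ioo (0 : ℝ) 1, ∀ C > (0 : ℝ), ∃ x : En 2,
      C * (lamNeg 2 Φ x + ‖gradient Φ x‖ ^ 2
          + (∑ α ∈ midx 2 k 2, |pdm 2 α Φ x| ^ ((2 - δ₁) / (mdeg α))) + 1)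
        < lamPos 2 Φ x := by
  intro k _ δ₁ hδ₁ C _
  have hδ₁' : δ₁ ∈ Set.Ioc (0 : ℝ) 2 := ⟨hδ₁.1, hδ₁.2.le.trans one_le_two⟩
  obtain ⟨t, ht⟩ := (Phi_violates_assumption_general Φ hΦ k hδ₁' C).exists
  exact ⟨!₂[0, t], ht⟩

end
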